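/- Fix 1 ≤ i ≤ n²/2 and j ∈ {0,1}, and let γ ∈ u be any element satisfying K^{-1}K̂·γ = q^{-2i}·γ and F·γ = β_{2i,j}. Then for every 1 ≤ s ≤ n²−1: F·E^sγ − q^{-s}·E^sβ_{2i,j} = s_{q^{-1}}(1 − q^{1−s−2i})·E^{s−1}γ. -/

import Mathlib

noncomputable section

open scoped TensorProduct

namespace QFL

/-- The defining relations of the quasi-Frobenius-Lusztig kernel `ũ_q(sl₂)`,
on the free algebra on four generators `K = ι 0`, `K̂ = ι 1`, `E = ι 2`, `F = ι 3`. -/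
inductive Rel (k : Type) [Field k] (n : ℕ) (q : k) :
    FreeAlgebra k (Fin 4) → FreeAlgebra k (Fin 4) → Prop
  | Kord : Rel k n q (FreeAlgebra.ι k (0 : Fin 4) ^ n) 1
  | Khord : Rel k n q (FreeAlgebra.ι k (1 : Fin 4) ^ n)
      ((FreeAlgebra.ι k (0 : Fin 4) ^ (n - 1)) ^ 2)
  | KKh : Rel k n q (FreeAlgebra.ι k (0 : Fin 4) * FreeAlgebra.ι k (1 : Fin 4))
      (FreeAlgebra.ι k (1 : Fin 4) * FreeAlgebra.ι k (0 : Fin 4))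
  | KE : Rel k n q
      (FreeAlgebra.ι k (0 : Fin 4) * FreeAlgebra.ι k (2 : Fin 4) *
        FreeAlgebra.ι k (0 : Fin 4) ^ (n - 1))
      (q ^ n • FreeAlgebra.ι k (2 : Fin 4))
  | KF : Rel k n q
      (FreeAlgebra.ι k (0 : Fin 4) * FreeAlgebra.ι k (3 : Fin 4) *
        FreeAlgebra.ι k (0 : Fin 4) ^ (n - 1))
      ((q ^ n)⁻¹ • FreeAlgebra.ι k (3 : Fin 4))
  | KhE : Rel k n q
      (FreeAlgebra.ι k (1 : Fin 4) * FreeAlgebra.ι k (2 : Fin 4) *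
        FreeAlgebra.ι k (1 : Fin 4) ^ (n ^ 2 - 1))
      ((q ^ n * (q ^ 2)⁻¹) • FreeAlgebra.ι k (2 : Fin 4))
  | KhF : Rel k n q
      (FreeAlgebra.ι k (1 : Fin 4) * FreeAlgebra.ι k (3 : Fin 4) *
        FreeAlgebra.ι k (1 : Fin 4) ^ (n ^ 2 - 1))
      (((q ^ n)⁻¹ * q ^ 2) • FreeAlgebra.ι k (3 : Fin 4))
  | Enil : Rel k n q (FreeAlgebra.ι k (2 : Fin 4) ^ n ^ 2) 0
  | Fnil : Rel k n q (FreeAlgebra.ι k (3 : Fin 4) ^ n ^ 2) 0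
  | EF : Rel k n q
      (FreeAlgebra.ι k (3 : Fin 4) * FreeAlgebra.ι k (2 : Fin 4) -
        q⁻¹ • (FreeAlgebra.ι k (2 : Fin 4) * FreeAlgebra.ι k (3 : Fin 4)))
      (1 - FreeAlgebra.ι k (0 : Fin 4) ^ (n - 1) * FreeAlgebra.ι k (1 : Fin 4))

/-- The algebra `ũ_q(sl₂)` as the quotient of the free algebra by the defining relations. -/
abbrev U (k : Type) [Field k] (n : ℕ) (q : k) := RingQuot (Rel k n q)

variable (k : Type) [Field k] (n : ℕ) (q : k)

def K : U k n q := RingQuot.mkAlgHom k (Rel k n q) (FreeAlgebra.ι k (0 : Fin 4))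
def Kh : U k n q := RingQuot.mkAlgHom k (Rel k n q) (FreeAlgebra.ι k (1 : Fin 4))
def E : U k n q := RingQuot.mkAlgHom k (Rel k n q) (FreeAlgebra.ι k (2 : Fin 4))
def F : U k n q := RingQuot.mkAlgHom k (Rel k n q) (FreeAlgebra.ι k (3 : Fin 4))

/-- `K⁻¹ = K^(n-1)`. -/
def Kinv : U k n q := K k n q ^ (n - 1)
/-- `K̂⁻¹ = K̂^(n²-1)`. -/
def Khinv : U k n q := Kh k n q ^ (n ^ 2 - 1)

/-- `φ_{2i} = (2/n²) Σ_{t<n²/2} q^{-2it} (K⁻¹K̂)^t`. -/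
def phi (i : ℕ) : U k n q :=
  ((n ^ 2 : k)⁻¹ * 2) • ∑ t ∈ Finset.range (n ^ 2 / 2),
    (q⁻¹ ^ (2 * i * t)) • (Kinv k n q * Kh k n q) ^ t

/-- `𝟙₀ = (1/2)(1 + KK̂^(n/2))` and `𝟙₁ = (1/2)(1 - KK̂^(n/2))`. -/
def oneJ (j : ℕ) : U k n q :=
  if j = 0 then (2 : k)⁻¹ • (1 + K k n q * Kh k n q ^ (n / 2))
  else (2 : k)⁻¹ • (1 - K k n q * Kh k n q ^ (n / 2))

/-- The idempotent `e_{2i,j} = φ_{2i} 𝟙_j`. -/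
def eIdem (i j : ℕ) : U k n q := phi k n q i * oneJ k n q j

/-- `α_{2i,j} = F^(n²-1) e_{2i,j}`. -/
def alpha (i j : ℕ) : U k n q := F k n q ^ (n ^ 2 - 1) * eIdem k n q i j

/-- `β_{2i,j} = E^(2i-2) α_{2i,j}`. -/
def beta (i j : ℕ) : U k n q := E k n q ^ (2 * i - 2) * alpha k n q i j

/-- The Gaussian number `s_q = 1 + q + ⋯ + q^(s-1)`. -/
def gauss (x : k) (s : ℕ) : k := ∑ t ∈ Finset.range s, x ^ t

/-- The span of the PBW-type monomials `F^a K^c K̂^d E^b` with `a ≤ n²-2`, `b ≤ n²-1`,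
`c ≤ n-1`, `d ≤ n²-1`. -/
def pbw : Submodule k (U k n q) :=
  Submodule.span k {x | ∃ a b c d : ℕ, a ≤ n ^ 2 - 2 ∧ b ≤ n ^ 2 - 1 ∧ c ≤ n - 1 ∧
    d ≤ n ^ 2 - 1 ∧ x = F k n q ^ a * K k n q ^ c * Kh k n q ^ d * E k n q ^ b}

/-- `γ_{2i,j}`: the unique element of the PBW span with `F·γ = β_{2i,j}`. -/
def gam (i j : ℕ) : U k n q :=
  @dite _ (∃! x, x ∈ pbw k n q ∧ F k n q * x = beta k n q i j)
    (Classical.propDecidable _) (fun h => h.choose) (fun _ => 0)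

/-- The left ideal `P_{2i,j} = u·γ_{2i,j}`. -/
def P (i j : ℕ) : Submodule (U k n q) (U k n q) :=
  Submodule.span (U k n q) {gam k n q i j}

/-- `S_{2i,j} = Soc(P_{2i,j})`, the sum of all simple submodules of `P_{2i,j}`. -/
def S (i j : ℕ) : Submodule (U k n q) (U k n q) :=
  sSup {N : Submodule (U k n q) (U k n q) | N ≤ P k n q i j ∧ IsSimpleModule (U k n q) N}

end QFL

/-!
Write `G = K⁻¹K̂`. Then `GE = q⁻²EG`: conjugating `E` by `K⁻¹` and by `K̂` yields the factors
`q̄⁻¹` and `q̄q⁻²`. Together with `FE = q⁻¹EF + (1 - G)`, this moves `F` past a power of `E`: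
`FEˢ = q⁻ˢEˢF + s_{q⁻¹} Eˢ⁻¹(1 - q^{1-s}G)`. On a vector on which `G` acts by a scalar this is
the asserted identity.
-/

namespace QFL

theorem semiconjBy_of_mul_mul_pow_sub_one_eq_smul {R A : Type*} [CommSemiring R] [Semiring A]
    [Algebra R A] {x y : A} {c : R} {m : ℕ} (hm : 0 < m) (hx : x ^ m = 1)
    (h : x * y * x ^ (m - 1) = c • y) : SemiconjBy y (c • x) x :=
  calc y * c • x = (c • y) * x := by rw [mul_smul_comm, smul_mul_assoc]
    _ = x * y * (x ^ (m - 1) * x) := by rw [← h, mul_assoc]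
    _ = x * y := by rw [pow_sub_one_mul hm.ne', hx, mul_one]

theorem mul_pow_succ_eq_of_mul_eq_smul_add_one_sub {R A : Type*} [CommRing R] [Ring A] [Algebra R A]
    {e f g : A} {x : R} (hfe : f * e = x • (e * f) + (1 - g)) (hge : g * e = x ^ 2 • (e * g))
    (s : ℕ) :
    f * e ^ (s + 1) = x ^ (s + 1) • (e ^ (s + 1) * f) +
      (∑ t ∈ Finset.range (s + 1), x ^ t) • (e ^ s * (1 - x ^ s • g)) := by
  induction s with
  | zero => simpa using hfe
  | succ s ih =>
    have one_sub_smul_mul_e : (1 - x ^ s • g) * e = e - x ^ (s + 2) • (e * g) := by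
      rw [sub_mul, one_mul, smul_mul_assoc, hge, smul_smul, ← pow_add]
    have coeff : x ^ (s + 1) + (∑ t ∈ Finset.range (s + 1), x ^ t) * x ^ (s + 2) =
        (∑ t ∈ Finset.range (s + 2), x ^ t) * x ^ (s + 1) := by
      rw [geom_sum_succ (n := s + 1)]; ring
    calc f * e ^ (s + 2)
        = x ^ (s + 1) • (e ^ (s + 1) * (f * e)) +
            (∑ t ∈ Finset.range (s + 1), x ^ t) • (e ^ s * ((1 - x ^ s • g) * e)) := by
          rw [pow_succ, ← mul_assoc, ih, add_mul]
          simp only [smul_mul_assoc, mul_assoc]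
      _ = x ^ (s + 2) • (e ^ (s + 2) * f) +
            ((x ^ (s + 1) + ∑ t ∈ Finset.range (s + 1), x ^ t) • e ^ (s + 1) -
              (x ^ (s + 1) + (∑ t ∈ Finset.range (s + 1), x ^ t) * x ^ (s + 2)) •
                (e ^ (s + 1) * g)) := by
          rw [hfe, one_sub_smul_mul_e]
          simp only [mul_add, mul_sub, mul_one, mul_smul_comm, ← mul_assoc, ← pow_succ]
          module
      _ = x ^ (s + 2) • (e ^ (s + 2) * f) +
            (∑ t ∈ Finset.range (s + 2), x ^ t) • (e ^ (s + 1) * (1 - x ^ (s + 1) • g)) := by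
          rw [coeff, ← geom_sum_succ', mul_sub, mul_one, mul_smul_comm, smul_sub, smul_smul]

variable (k : Type) [Field k] (n : ℕ) (q : k)

theorem K_pow : K k n q ^ n = 1 := by
  simpa only [K, map_pow, map_one] using RingQuot.mkAlgHom_rel k (Rel.Kord (n := n) (q := q))

theorem Kh_pow : Kh k n q ^ n = Kinv k n q ^ 2 := by
  simpa only [K, Kh, Kinv, map_pow] using RingQuot.mkAlgHom_rel k (Rel.Khord (n := n) (q := q))

theorem Kh_pow_sq : Kh k n q ^ n ^ 2 = 1 := by
  rw [sq, pow_mul, Kh_pow, Kinv, pow_right_comm _ 2 n, pow_right_comm _ (n - 1) n, K_pow,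
    one_pow, one_pow]

theorem F_mul_E :
    F k n q * E k n q = q⁻¹ • (E k n q * F k n q) + (1 - Kinv k n q * Kh k n q) := by
  have relation := RingQuot.mkAlgHom_rel k (Rel.EF (n := n) (q := q))
  simp only [map_sub, map_mul, map_smul, map_pow, map_one] at relation
  exact sub_eq_iff_eq_add'.mp relation

variable {n}

theorem semiconjBy_E_K (hn : 0 < n) : SemiconjBy (E k n q) (q ^ n • K k n q) (K k n q) :=
  semiconjBy_of_mul_mul_pow_sub_one_eq_smul hn (K_pow k n q) <| by
    simpa only [K, E, map_mul, map_pow, map_smul] using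
      RingQuot.mkAlgHom_rel k (Rel.KE (n := n) (q := q))

theorem semiconjBy_E_Kh (hn : 0 < n) :
    SemiconjBy (E k n q) ((q ^ n * (q ^ 2)⁻¹) • Kh k n q) (Kh k n q) :=
  semiconjBy_of_mul_mul_pow_sub_one_eq_smul (pow_pos hn 2) (Kh_pow_sq k n q) <| by
    simpa only [Kh, E, map_mul, map_pow, map_smul] using
      RingQuot.mkAlgHom_rel k (Rel.KhE (n := n) (q := q))

theorem pow_sq_smul_E (hn : 0 < n) : q ^ n ^ 2 • E k n q = E k n q := by
  have semiconj := ((semiconjBy_E_K k q hn).pow_right n).eq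
  rwa [smul_pow, K_pow, one_mul, mul_smul_comm, mul_one, ← pow_mul, ← sq] at semiconj

theorem Kinv_mul_Kh_mul_E (hn : 0 < n) :
    Kinv k n q * Kh k n q * E k n q = q⁻¹ ^ 2 • (E k n q * (Kinv k n q * Kh k n q)) := by
  have scalar : (q ^ n) ^ (n - 1) * (q ^ n * (q ^ 2)⁻¹) = q⁻¹ ^ 2 * q ^ n ^ 2 := by
    rw [← mul_assoc, pow_sub_one_mul hn.ne', ← pow_mul, ← sq, inv_pow, mul_comm]
  calc Kinv k n q * Kh k n q * E k n q
      = E k n q * ((q ^ n • K k n q) ^ (n - 1) * (q ^ n * (q ^ 2)⁻¹) • Kh k n q) :=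
        (((semiconjBy_E_K k q hn).pow_right (n - 1)).mul_right (semiconjBy_E_Kh k q hn)).eq.symm
    _ = (q⁻¹ ^ 2 * q ^ n ^ 2) • (E k n q * (Kinv k n q * Kh k n q)) := by
        rw [smul_pow, smul_mul_smul_comm, mul_smul_comm, scalar, Kinv]
    _ = q⁻¹ ^ 2 • (E k n q * (Kinv k n q * Kh k n q)) := by
        rw [mul_smul, ← smul_mul_assoc, pow_sq_smul_E k q hn]

theorem F_mul_E_pow_succ (hn : 0 < n) (s : ℕ) :
    F k n q * E k n q ^ (s + 1) = q⁻¹ ^ (s + 1) • (E k n q ^ (s + 1) * F k n q) +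
      gauss k q⁻¹ (s + 1) • (E k n q ^ s * (1 - q⁻¹ ^ s • (Kinv k n q * Kh k n q))) :=
  mul_pow_succ_eq_of_mul_eq_smul_add_one_sub (F_mul_E k n q) (Kinv_mul_Kh_mul_E k q hn) s

end QFL

open QFL in
theorem statement3_general {k : Type} [Field k] {n : ℕ} (hn : 0 < n) {q : k} (hq : q ≠ 0)
    {M : Type*} [AddCommGroup M] [Module k M] [Module (U k n q) M] [IsScalarTower k (U k n q) M]
    {c : k} {v : M} (hv : (Kinv k n q * Kh k n q) • v = c • v) {s : ℕ} (hs : 1 ≤ s) :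
    F k n q • E k n q ^ s • v - q⁻¹ ^ s • E k n q ^ s • F k n q • v =
      (gauss k q⁻¹ s * (1 - q ^ (1 - (s : ℤ)) * c)) • E k n q ^ (s - 1) • v := by
  obtain ⟨t, rfl⟩ := Nat.exists_eq_add_of_le' hs
  have scalar : q ^ (1 - ((t + 1 : ℕ) : ℤ)) = q⁻¹ ^ t := by
    rw [zpow_sub₀ hq, zpow_one, zpow_natCast, pow_succ', div_mul_cancel_left₀ hq, inv_pow]
  have weight : (1 - q⁻¹ ^ t • (Kinv k n q * Kh k n q)) • v = (1 - q⁻¹ ^ t * c) • v := by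
    rw [sub_smul, one_smul, smul_assoc, hv, smul_smul, sub_smul, one_smul]
  have lowering := congrArg (· • v) (F_mul_E_pow_succ k q hn t)
  simp only [add_smul, smul_assoc, mul_smul, weight] at lowering
  rw [lowering, add_sub_cancel_left, scalar, Nat.add_sub_cancel, mul_smul,
    smul_comm (E k n q ^ t)]

open QFL in
/-- Lemma 2.8: the lowering identity for `E^s γ`. -/
theorem statement3 (k : Type) [Field k] [IsAlgClosed k] [CharZero k]
    (n : ℕ) (hn : 0 < n) (h4 : 4 ∣ n) (q : k) (hq : IsPrimitiveRoot q (n ^ 2))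
    (i j : ℕ) (hi1 : 1 ≤ i) (hi2 : i ≤ n ^ 2 / 2) (hj : j ≤ 1)
    (γ : U k n q)
    (hγ1 : (Kinv k n q * Kh k n q) * γ = (q ^ (-(2 * (i : ℤ)))) • γ)
    (hγ2 : F k n q * γ = beta k n q i j) :
    ∀ s : ℕ, 1 ≤ s → s ≤ n ^ 2 - 1 →
      F k n q * (E k n q ^ s * γ) - (q⁻¹ ^ s) • (E k n q ^ s * beta k n q i j) =
        (gauss k q⁻¹ s * (1 - q ^ (1 - (s : ℤ) - 2 * (i : ℤ)))) •
          (E k n q ^ (s - 1) * γ) := by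
  intro s hs _
  have hq0 : q ≠ 0 := hq.ne_zero (pow_pos hn 2).ne'
  rw [← hγ2, sub_eq_add_neg (1 - (s : ℤ)), zpow_add₀ hq0]
  exact statement3_general hn hq0 hγ1 hs
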